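/- Let (Ω, μ) be a measure space, let 1 < p < 2, and let C be a nonempty convex subset of L^p(μ). Set d = inf {‖f‖_p : f ∈ C}. Then every minimizing sequence is Cauchy: if f_ν ∈ C and ‖f_ν‖_p → d as ν → ∞, then ‖f_ν − f_μ‖_p → 0 as ν, μ → ∞. -/

import Mathlib

open MeasureTheory Filter
open scoped ENNReal

/-!
Write `r` for the real exponent. Since `|x| ^ r` is strictly convex, compactness and homogeneity
give, for every `ε > 0`, a constant `K` with
`|a - b| ^ r ≤ ε (|a| ^ r + |b| ^ r) + K (|a| ^ r + |b| ^ r - 2 |(a + b) / 2| ^ r)`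
for all real `a, b` (`abs_sub_rpow_le`). Integrating yields the same inequality for norms in `L^p`,
which takes the place of Clarkson's second inequality. For members of a minimizing sequence the
midpoint lies in `C`, hence has norm at least `d`; so the `K`-term is bounded by a quantity tending
to `0`, while the `ε`-term tends to `2 ε d ^ r`, which is as small as desired.
-/

/-- Strict midpoint convexity of `|x| ^ r` on the whole real line. -/
lemma abs_rpow_midpoint_lt {r : ℝ} (hr : 1 < r) {a b : ℝ} (hab : a ≠ b) :
    2 * |2⁻¹ * (a + b)| ^ r < |a| ^ r + |b| ^ r := by
  by_cases h : |a| = |b|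
  · rcases abs_eq_abs.1 h with h | h
    · exact absurd h hab
    · subst h
      have hb : b ≠ 0 := by rintro rfl; simp at hab
      have : 0 < |b| ^ r := Real.rpow_pos_of_pos (abs_pos.2 hb) r
      simp only [neg_add_cancel, mul_zero, abs_zero, abs_neg]
      rw [Real.zero_rpow (by linarith)]
      linarith
  · have h1 := (strictConvexOn_rpow hr).2 (abs_nonneg a) (abs_nonneg b) h
      (show (0 : ℝ) < 2⁻¹ by norm_num) (show (0 : ℝ) < 2⁻¹ by norm_num) (by norm_num)
    simp only [smul_eq_mul] at h1
    have h2 : |2⁻¹ * (a + b)| ^ r ≤ (2⁻¹ * |a| + 2⁻¹ * |b|) ^ r := by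
      apply Real.rpow_le_rpow (abs_nonneg _) _ (by linarith)
      rw [abs_mul, abs_of_pos (by norm_num : (0 : ℝ) < 2⁻¹)]
      linarith [abs_add_le a b]
    linarith

/-- A quantitative form of strict convexity. Both sides are homogeneous of degree `r` in `(a, b)`,
so it suffices to treat the unit sphere of `ℝ × ℝ`; on the compact part of the sphere where
`ε ≤ |a - b| ^ r`, the convexity defect is bounded below by a positive constant. -/
lemma abs_sub_rpow_le {r : ℝ} (hr : 1 < r) {ε : ℝ} (hε : 0 < ε) :
    ∃ K : ℝ, 0 ≤ K ∧ ∀ a b : ℝ, |a - b| ^ r ≤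
      ε * (|a| ^ r + |b| ^ r) + K * (|a| ^ r + |b| ^ r - 2 * |2⁻¹ * (a + b)| ^ r) := by
  have hr0 : 0 < r := by linarith
  have hc : ∀ g : ℝ × ℝ → ℝ, Continuous g → Continuous fun x => |g x| ^ r := fun g hg =>
    hg.abs.rpow_const fun _ => Or.inr hr0.le
  have hD : ∀ a b : ℝ, 0 ≤ |a| ^ r + |b| ^ r - 2 * |2⁻¹ * (a + b)| ^ r := by
    intro a b
    by_cases h : a = b
    · subst h
      rw [show 2⁻¹ * (a + a) = a by ring]
      linarith
    · linarith [abs_rpow_midpoint_lt hr h]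
  have hS : IsCompact (Metric.sphere (0 : ℝ × ℝ) 1 ∩ {x | ε ≤ |x.1 - x.2| ^ r}) :=
    (isCompact_sphere _ _).inter_right
      (isClosed_le continuous_const (hc _ (continuous_fst.sub continuous_snd)))
  obtain ⟨m, hm, hmS⟩ := hS.exists_forall_le'
    (f := fun x : ℝ × ℝ => |x.1| ^ r + |x.2| ^ r - 2 * |2⁻¹ * (x.1 + x.2)| ^ r) (a := 0)
    (((hc _ continuous_fst).add (hc _ continuous_snd)).sub
      (continuous_const.mul (hc _ (by fun_prop)))).continuousOn
    (by
      rintro ⟨a, b⟩ ⟨-, hx⟩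
      have hab : a ≠ b := by
        rintro rfl
        simp only [Set.mem_ofPred_eq, sub_self, abs_zero, Real.zero_rpow hr0.ne'] at hx
        linarith
      simpa using abs_rpow_midpoint_lt hr hab)
  have key : ∀ a b : ℝ, ‖(a, b)‖ = 1 → |a - b| ^ r ≤
      ε * (|a| ^ r + |b| ^ r) +
        2 ^ r / m * (|a| ^ r + |b| ^ r - 2 * |2⁻¹ * (a + b)| ^ r) := by
    intro a b hab
    have hmax : max |a| |b| = 1 := by simpa [Prod.norm_def] using hab
    have hK : 0 ≤ 2 ^ r / m * (|a| ^ r + |b| ^ r - 2 * |2⁻¹ * (a + b)| ^ r) :=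
      mul_nonneg (by positivity) (hD a b)
    have hsum : 1 ≤ |a| ^ r + |b| ^ r := by
      have ha := Real.rpow_nonneg (abs_nonneg a) r
      have hb := Real.rpow_nonneg (abs_nonneg b) r
      rcases max_choice |a| |b| with h | h
      · rw [← h, hmax, Real.one_rpow]; linarith
      · rw [hmax] at h; rw [← h, Real.one_rpow]; linarith
    by_cases h : ε ≤ |a - b| ^ r
    · have h1 := hmS (a, b) ⟨by simpa using hab, h⟩
      have h2 : |a - b| ^ r ≤ 2 ^ r := by
        apply Real.rpow_le_rpow (abs_nonneg _) _ hr0.le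
        have := le_max_left |a| |b|
        have := le_max_right |a| |b|
        linarith [abs_sub a b]
      have h3 : 2 ^ r ≤ 2 ^ r / m * (|a| ^ r + |b| ^ r - 2 * |2⁻¹ * (a + b)| ^ r) := by
        calc (2 : ℝ) ^ r = 2 ^ r / m * m := by field_simp
          _ ≤ _ := mul_le_mul_of_nonneg_left h1 (by positivity)
      have : 0 ≤ ε * (|a| ^ r + |b| ^ r) := by positivity
      linarith
    · have := mul_le_mul_of_nonneg_left hsum hε.le
      linarith
  refine ⟨2 ^ r / m, by positivity, fun a b => ?_⟩
  rcases eq_or_ne (a, b) 0 with h0 | h0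
  · obtain ⟨rfl, rfl⟩ := Prod.mk.inj h0
    simp [Real.zero_rpow hr0.ne']
  · set t := ‖(a, b)‖ with ht
    have htpos : 0 < t := norm_pos_iff.2 h0
    have h1 := key (t⁻¹ * a) (t⁻¹ * b) (by
      have : (t⁻¹ * a, t⁻¹ * b) = t⁻¹ • (a, b) := rfl
      rw [this, norm_smul, norm_inv, Real.norm_of_nonneg htpos.le]
      exact inv_mul_cancel₀ htpos.ne')
    have hs : ∀ x : ℝ, |t⁻¹ * x| ^ r = (t⁻¹) ^ r * |x| ^ r := fun x => by
      rw [abs_mul, abs_of_pos (inv_pos.2 htpos),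
        Real.mul_rpow (inv_pos.2 htpos).le (abs_nonneg x)]
    rw [← mul_sub, ← mul_add, mul_left_comm 2⁻¹ t⁻¹, hs, hs, hs, hs] at h1
    have hpos : 0 < (t⁻¹) ^ r := Real.rpow_pos_of_pos (inv_pos.2 htpos) r
    refine le_of_mul_le_mul_left (h1.trans_eq ?_) hpos
    ring

lemma Lp_norm_rpow_eq_integral {Ω : Type*} [MeasurableSpace Ω] {μ : Measure Ω}
    {p : ℝ≥0∞} (h0 : p ≠ 0) (htop : p ≠ ∞) (f : Lp ℝ p μ) :
    ‖f‖ ^ p.toReal = ∫ x, |f x| ^ p.toReal ∂μ := by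
  have hr : 0 < p.toReal := ENNReal.toReal_pos h0 htop
  have hI : 0 ≤ ∫ x, ‖f x‖ ^ p.toReal ∂μ := integral_nonneg fun x => by positivity
  rw [Lp.norm_def, (Lp.memLp f).eLpNorm_eq_integral_rpow_norm h0 htop,
    ENNReal.toReal_ofReal (by positivity), Real.rpow_inv_rpow hI hr.ne']
  rfl

/-- For `1 < p < 2` and a nonempty convex subset `C` of `L^p(μ)` with
`d = inf {‖f‖ : f ∈ C}`, every minimizing sequence is Cauchy:
if `f ν ∈ C` and `‖f ν‖ → d`, then `‖f ν - f μ'‖ → 0` as `ν, μ' → ∞`.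
Convexity of `C` is, following the paper, midpoint convexity. -/
theorem minimizing_seq_cauchy_of_lt_two
    {Ω : Type*} [MeasurableSpace Ω] (μ : Measure Ω)
    (p : ℝ≥0∞) [Fact (1 ≤ p)] (hp1 : 1 < p) (hp2 : p < 2)
    (C : Set (Lp ℝ p μ)) (hne : C.Nonempty)
    (hconv : ∀ f ∈ C, ∀ g ∈ C, (2⁻¹ : ℝ) • (f + g) ∈ C)
    (f : ℕ → Lp ℝ p μ) (hfC : ∀ ν, f ν ∈ C)
    (hmin : Tendsto (fun ν => ‖f ν‖) atTop (nhds (sInf (norm '' C)))) :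
    Tendsto (fun νμ : ℕ × ℕ => ‖f νμ.1 - f νμ.2‖) atTop (nhds 0) := by
  have h0 : p ≠ 0 := (zero_lt_one.trans hp1).ne'
  have htop : p ≠ ∞ := (hp2.trans (by simp)).ne
  have hr : 1 < p.toReal := by
    simpa using (ENNReal.toReal_lt_toReal ENNReal.one_ne_top htop).2 hp1
  set r := p.toReal with hrdef
  have hr0 : 0 < r := by linarith
  set d := sInf (norm '' C) with hd
  have hd0 : 0 ≤ d := Real.sInf_nonneg (by rintro _ ⟨g, -, rfl⟩; exact norm_nonneg g)
  have hdle : ∀ g ∈ C, d ≤ ‖g‖ := fun g hg =>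
    csInf_le ⟨0, by rintro _ ⟨g, -, rfl⟩; exact norm_nonneg g⟩ ⟨g, hg, rfl⟩
  have hint : ∀ g : Lp ℝ p μ, Integrable (fun x => |g x| ^ r) μ := fun g =>
    (Lp.memLp g).integrable_norm_rpow h0 htop
  -- The pointwise inequality of `abs_sub_rpow_le`, integrated over `Ω`.
  have hLp : ∀ ε : ℝ, 0 < ε → ∃ K : ℝ, 0 ≤ K ∧ ∀ u v : Lp ℝ p μ, ‖u - v‖ ^ r ≤
      ε * (‖u‖ ^ r + ‖v‖ ^ r) +
        K * (‖u‖ ^ r + ‖v‖ ^ r - 2 * ‖(2⁻¹ : ℝ) • (u + v)‖ ^ r) := by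
    intro ε hε
    obtain ⟨K, hK, h⟩ := abs_sub_rpow_le hr hε
    refine ⟨K, hK, fun u v => ?_⟩
    simp only [hrdef, Lp_norm_rpow_eq_integral h0 htop]
    simp only [← hrdef]
    have hsum : Integrable (fun x => |u x| ^ r + |v x| ^ r) μ := (hint u).add (hint v)
    have hmid := (hint ((2⁻¹ : ℝ) • (u + v))).const_mul 2
    have hdef : Integrable (fun x => |u x| ^ r + |v x| ^ r -
        2 * |((2⁻¹ : ℝ) • (u + v) : Lp ℝ p μ) x| ^ r) μ := hsum.sub hmid
    rw [← integral_add (hint u) (hint v), ← integral_const_mul, ← integral_const_mul,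
      ← integral_sub hsum hmid, ← integral_const_mul,
      ← integral_add (hsum.const_mul ε) (hdef.const_mul K)]
    refine integral_mono_ae (hint _) ((hsum.const_mul ε).add (hdef.const_mul K)) ?_
    filter_upwards [Lp.coeFn_sub u v, Lp.coeFn_add u v, Lp.coeFn_smul (2⁻¹ : ℝ) (u + v)]
      with x h1 h2 h3
    have := h (u x) (v x)
    simp only [Pi.sub_apply, Pi.add_apply, Pi.smul_apply, smul_eq_mul] at h1 h2 h3 ⊢
    rw [h1, h3, h2]
    exact this
  rw [← prod_atTop_atTop_eq]
  have hx : Tendsto (fun ν => ‖f ν‖ ^ r) atTop (nhds (d ^ r)) :=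
    hmin.rpow_const (Or.inr hr0.le)
  have hx1 := hx.comp (tendsto_fst (f := (atTop : Filter ℕ)) (g := (atTop : Filter ℕ)))
  have hx2 := hx.comp (tendsto_snd (f := (atTop : Filter ℕ)) (g := (atTop : Filter ℕ)))
  have hdr : 0 ≤ d ^ r := Real.rpow_nonneg hd0 r
  rw [Metric.tendsto_nhds]
  intro η hη
  have hηr : 0 < η ^ r := Real.rpow_pos_of_pos hη r
  -- With this `ε`, the limit `ε * (2 * d ^ r)` of the upper bound is less than `η ^ r`.
  obtain ⟨K, hK, h⟩ := hLp (η ^ r / (2 * d ^ r + 1)) (by positivity)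
  have hlim := ((hx1.add hx2).const_mul (η ^ r / (2 * d ^ r + 1))).add
    (((hx1.add hx2).sub_const (2 * d ^ r)).const_mul K)
  have hlt : η ^ r / (2 * d ^ r + 1) * (d ^ r + d ^ r) + K * (d ^ r + d ^ r - 2 * d ^ r)
      < η ^ r := by
    rw [show d ^ r + d ^ r - 2 * d ^ r = 0 by ring, mul_zero, add_zero, div_mul_eq_mul_div,
      div_lt_iff₀ (by positivity)]
    linarith
  filter_upwards [hlim.eventually_lt_const hlt] with x hxlt
  simp only [Function.comp_apply] at hxlt
  rw [Real.dist_eq, sub_zero, abs_of_nonneg (norm_nonneg _)]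
  rw [← Real.rpow_lt_rpow_iff (norm_nonneg _) hη.le hr0]
  refine ((h _ _).trans ?_).trans_lt hxlt
  have hmid : d ^ r ≤ ‖(2⁻¹ : ℝ) • (f x.1 + f x.2)‖ ^ r :=
    Real.rpow_le_rpow hd0 (hdle _ (hconv _ (hfC _) _ (hfC _))) hr0.le
  gcongr
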